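/- Let n ≥ 1 and let Y be the n×n matrix over the polynomial ring ℤ[y_{ij} : 1 ≤ i ≤ j ≤ n] whose (i,j) entry is the indeterminate y_{ij} if i ≤ j and 0 if i > j. Let R, S ⊆ [n] with |R| = |S|. Then det(Y^R_S) ≠ 0 if and only if R ≤ S, i.e., if and only if for every 1 ≤ k ≤ |R| the k-th least element of R is at most the k-th least element of S. -/

import Mathlib

open MvPolynomial

/-- The generic `b × b` upper-triangular matrix: the `(i,j)` entry is the indeterminate
`y_{ij}` if `i ≤ j`, and `0` if `i > j`. -/
noncomputable def genY (b : ℕ) :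
    Matrix (Fin b) (Fin b) (MvPolynomial (Fin b × Fin b) ℤ) :=
  fun i j => if i ≤ j then X (i, j) else 0

/-- The square submatrix of `M` with rows indexed by `R` and columns indexed by `S`
(each arranged in increasing order). -/
def submat {b k : ℕ} {A : Type*} (M : Matrix (Fin b) (Fin b) A)
    (R S : Finset (Fin b)) (hR : R.card = k) (hS : S.card = k) : Matrix (Fin k) (Fin k) A :=
  fun a c => M (R.orderIsoOfFin hR a) (S.orderIsoOfFin hS c)

/-- Gale order: `R ≤ S` iff same cardinality and for each `k`, the `k`-th least element of `R`
is at most the `k`-th least element of `S`. -/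
def GaleLE {n : ℕ} (R S : Finset (Fin n)) : Prop :=
  R.card = S.card ∧ ∀ (k : ℕ) (hR : k < R.card) (hS : k < S.card),
    (R.orderIsoOfFin rfl ⟨k, hR⟩ : Fin n) ≤ (S.orderIsoOfFin rfl ⟨k, hS⟩ : Fin n)

lemma orderIso_cast_aux {n m : ℕ} (S : Finset (Fin n)) (hm : S.card = m) (k : ℕ)
    (hk : k < S.card) (hk' : k < m) :
    (S.orderIsoOfFin rfl ⟨k, hk⟩ : Fin n) = (S.orderIsoOfFin hm ⟨k, hk'⟩ : Fin n) := by
  subst hm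
  rfl

/-- For the generic upper-triangular matrix `Y`, the minor `det(Y^R_S)` is nonzero if and only
if `R ≤ S` in the Gale order. -/
theorem det_submat_ne_zero_iff_gale (n : ℕ) (hn : 1 ≤ n) (R S : Finset (Fin n))
    (h : R.card = S.card) :
    (submat (genY n) R S rfl h.symm).det ≠ 0 ↔ GaleLE R S := by
  constructor
  · intro hdet
    refine ⟨h, fun k hR hS => ?_⟩
    rw [orderIso_cast_aux S h.symm k hS hR]
    by_contra hlt
    rw [not_le] at hlt
    apply hdet
    rw [Matrix.det_apply]
    refine Finset.sum_eq_zero fun σ _ => ?_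
    by_contra hne
    have hle : ∀ i, (R.orderIsoOfFin rfl (σ i) : Fin n) ≤ S.orderIsoOfFin h.symm i := by
      intro i
      by_contra hi
      apply hne
      rw [Finset.prod_eq_zero (Finset.mem_univ i), smul_zero]
      simp only [submat, genY]
      rw [if_neg hi]
    have hmap : ∀ i ∈ Finset.Iic (⟨k, hR⟩ : Fin R.card), σ i ∈ Finset.Iio (⟨k, hR⟩ : Fin R.card) := by
      intro i hi
      rw [Finset.mem_Iic] at hi
      rw [Finset.mem_Iio]
      have h1 : (S.orderIsoOfFin h.symm i : Fin n) ≤ S.orderIsoOfFin h.symm ⟨k, hR⟩ :=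
        (S.orderIsoOfFin h.symm).monotone hi
      have h2 : R.orderIsoOfFin rfl (σ i) < R.orderIsoOfFin rfl ⟨k, hR⟩ :=
        Subtype.coe_lt_coe.mp (((hle i).trans h1).trans_lt hlt)
      exact (R.orderIsoOfFin rfl).lt_iff_lt.mp h2
    have := Finset.card_le_card_of_injOn σ hmap σ.injective.injOn
    simp at this
  · rintro ⟨-, hle⟩ hdet
    classical
    let f : Fin n × Fin n → ℤ := fun p =>
      if ∃ k : Fin R.card, (R.orderIsoOfFin rfl k : Fin n) = p.1 ∧
        (S.orderIsoOfFin h.symm k : Fin n) = p.2 then 1 else 0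
    have key : (eval f).mapMatrix (submat (genY n) R S rfl h.symm) = 1 := by
      ext a c
      simp only [RingHom.mapMatrix_apply, Matrix.map_apply, submat, genY]
      by_cases hac : a = c
      · subst hac
        have := hle a a.2 (h ▸ a.2)
        rw [orderIso_cast_aux S h.symm a _ a.2] at this
        rw [if_pos this, eval_X, Matrix.one_apply_eq]
        exact if_pos ⟨a, rfl, rfl⟩
      · rw [Matrix.one_apply_ne hac]
        split_ifs
        · rw [eval_X]
          refine if_neg ?_
          rintro ⟨k, h1, h2⟩
          have e1 := (R.orderIsoOfFin rfl).injective (Subtype.ext h1)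
          have e2 := (S.orderIsoOfFin h.symm).injective (Subtype.ext h2)
          exact hac (e1.symm.trans e2)
        · simp
    have := congrArg (eval f) hdet
    rw [RingHom.map_det, key] at this
    simp at this
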